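/- Let ν be a Borel probability measure on Σ that is exact-dimensional with dimension D > h_X. Then with probability 1, conditional on Q·ν ≠ 0, the measure Q·ν is exact-dimensional with dimension D − h_X. -/

import Mathlib

open MeasureTheory ProbabilityTheory Filter Set
open scoped ENNReal

noncomputable section

/-- The one-sided symbolic space over the alphabet `{0, …, b-1}`. -/
abbrev SymbSpace (b : ℕ) : Type := ℕ → Fin b

/-- The cylinder `[w]` of sequences starting with the finite word `w`. -/
def cylinder {b : ℕ} (w : List (Fin b)) : Set (SymbSpace b) :=
  {x | ∀ i : Fin w.length, x i = w.get i}

/-- The prefix `x|_n` of `x` of length `n`, as a finite word. -/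
def wordPrefix {b : ℕ} (x : SymbSpace b) (n : ℕ) : List (Fin b) :=
  List.ofFn (fun i : Fin n => x i)

/-- `Y_w = X_{w_1} X_{w_1w_2} ⋯ X_{w_1⋯w_n}`. -/
def cascadeY {b : ℕ} {Ω : Type*} (X : List (Fin b) → Ω → ℝ) (w : List (Fin b)) (ω : Ω) : ℝ :=
  ∏ k ∈ Finset.range w.length, X (w.take (k + 1)) ω

/-- The total mass `Z_n = ∑_{|u| = n} Y_u ν([u])`. -/
def cascadeZ {b : ℕ} {Ω : Type*} (X : List (Fin b) → Ω → ℝ) (ν : Measure (SymbSpace b))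
    (n : ℕ) (ω : Ω) : ℝ :=
  ∑ u : Fin n → Fin b, cascadeY X (List.ofFn u) ω * (ν (cylinder (List.ofFn u))).toReal

/-- `Z = limsup_n Z_n`. -/
def cascadeZlim {b : ℕ} {Ω : Type*} (X : List (Fin b) → Ω → ℝ) (ν : Measure (SymbSpace b))
    (ω : Ω) : ℝ :=
  Filter.limsup (fun n => cascadeZ X ν n ω) atTop

/-- Assumption (M1): the weights `X_u`, `u` a nonempty finite word, are i.i.d. with common
law that of the nonnegative random variable `X₀` of expectation 1. -/
structure CascadeM1 {b : ℕ} {Ω : Type*} [MeasurableSpace Ω] (P : Measure Ω)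
    (X : List (Fin b) → Ω → ℝ) (X₀ : Ω → ℝ) : Prop where
  meas : ∀ w, Measurable (X w)
  nonneg : ∀ w ω, 0 ≤ X w ω
  meas₀ : Measurable X₀
  nonneg₀ : ∀ ω, 0 ≤ X₀ ω
  mean₀ : ∫ ω, X₀ ω ∂P = 1
  indep : iIndepFun
    (fun w : {w : List (Fin b) // w ≠ []} => X w.1) P
  ident : ∀ w : List (Fin b), w ≠ [] → IdentDistrib (X w) X₀ P P

/-- `h_X = E(X log X) ∈ [0, ∞]` (well defined since `x log x ≥ -e⁻¹` and, by convexity,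
`E(X log X) ≥ E(X) log E(X) = 0`), encoded as an extended nonnegative real. -/
def entropyX {Ω : Type*} [MeasurableSpace Ω] (P : Measure Ω) (X₀ : Ω → ℝ) : ℝ≥0∞ :=
  (∫⁻ ω, ENNReal.ofReal (X₀ ω * Real.log (X₀ ω)) ∂P) -
    (∫⁻ ω, ENNReal.ofReal (-(X₀ ω * Real.log (X₀ ω))) ∂P)

/-- The lower local dimension `liminf_n (-log ν([x|_n]) / n)` of `ν` at `x`, valued
in `[0, ∞]`. -/
def lowerLocalDim {b : ℕ} (ν : Measure (SymbSpace b)) (x : SymbSpace b) : ℝ≥0∞ :=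
  Filter.liminf
    (fun n : ℕ => ENNReal.ofReal (-Real.log ((ν (cylinder (wordPrefix x n))).toReal) / n))
    atTop

/-- The upper local dimension `limsup_n (-log ν([x|_n]) / n)` of `ν` at `x`. -/
def upperLocalDim {b : ℕ} (ν : Measure (SymbSpace b)) (x : SymbSpace b) : ℝ≥0∞ :=
  Filter.limsup
    (fun n : ℕ => ENNReal.ofReal (-Real.log ((ν (cylinder (wordPrefix x n))).toReal) / n))
    atTop

/-- The lower Hausdorff dimension of `ν`: the `ν`-essential infimum of the lower local
dimension. -/
def lowerHausdorffDim {b : ℕ} (ν : Measure (SymbSpace b)) : ℝ≥0∞ :=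
  essInf (lowerLocalDim ν) ν

/-- The upper Hausdorff dimension of `ν`: the `ν`-essential supremum of the lower local
dimension. -/
def upperHausdorffDim {b : ℕ} (ν : Measure (SymbSpace b)) : ℝ≥0∞ :=
  essSup (lowerLocalDim ν) ν

/-- The upper packing dimension of `ν`: the `ν`-essential supremum of the upper local
dimension. -/
def upperPackingDim {b : ℕ} (ν : Measure (SymbSpace b)) : ℝ≥0∞ :=
  essSup (upperLocalDim ν) ν

/-!
Size-biasing the cascade by its density `Q_k(ω, x)` gives the Peyrière measure of pairs `(ω, x)`.
Under it `x` has law `ν`, and along the spine `x` the weights are independent with the size-biased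
law, whose mean logarithm is `h_X`. By the strong law of large numbers and the exact dimensionality
of `ν`, the typical set where `Q_n ≈ exp (n h_X)` and `ν [x|_n] ≈ exp (-n D)` for all `n ≤ k` has
almost full mass, uniformly in `k`.

It remains to compare the mass `(Q_k · ν) [x|_n]` with `(Q_n · ν) [x|_n] = Q_n ν [x|_n]`. It cannot
be much smaller, since the cylinders `[w]` on which `Q_k · ν` is at most `c` times `Q_n · ν` carry
`Q_k · ν`-mass at most `c` times the total mass of `Q_n · ν`. It cannot be much larger by Markov's
inequality: on the typical set, the points that branch off from `x` at a level `m ≥ n` contribute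
in mean about `exp (m (h_X - D))`, and as `h_X < D` this sums to about `exp (n (h_X - D))`.

Up to factors `exp (± ε n)`, both bounds fail on the typical set with a probability exponentially
small in `n`, uniformly in `k ≥ n`. Summing over `n` bounds the mass of the exceptional points of
`Q_k · ν`, and as the exceptional values form open sets, Fatou's lemma carries this to `Q · ν`.
-/

/-! ### Words and cylinders -/

section Words

variable {b : ℕ}

lemma length_wordPrefix (x : SymbSpace b) (n : ℕ) : (wordPrefix x n).length = n :=
  List.length_ofFn

lemma wordPrefix_injective (x : SymbSpace b) : Function.Injective (wordPrefix x) := fun m n h => by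
  simpa only [length_wordPrefix] using congrArg List.length h

lemma wordPrefix_succ_ne_nil (x : SymbSpace b) (n : ℕ) : wordPrefix x (n + 1) ≠ [] := by
  simp [wordPrefix]

lemma take_wordPrefix (x : SymbSpace b) {n k : ℕ} (h : n ≤ k) :
    (wordPrefix x k).take n = wordPrefix x n :=
  List.ext_getElem (by simp [wordPrefix, h]) (by simp [wordPrefix])

lemma wordPrefix_eq_of_le {x y : SymbSpace b} {n k : ℕ} (h : n ≤ k)
    (hk : wordPrefix y k = wordPrefix x k) : wordPrefix y n = wordPrefix x n := by
  rw [← take_wordPrefix y h, hk, take_wordPrefix x h]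

lemma mem_cylinder_iff {w : List (Fin b)} {x : SymbSpace b} :
    x ∈ cylinder w ↔ wordPrefix x w.length = w := by
  simp +contextual [_root_.cylinder, wordPrefix, List.ext_getElem_iff, Fin.forall_iff]

lemma mem_cylinder_wordPrefix {x y : SymbSpace b} {n : ℕ} :
    y ∈ cylinder (wordPrefix x n) ↔ wordPrefix y n = wordPrefix x n := by
  rw [mem_cylinder_iff, length_wordPrefix]

lemma cylinder_eq_preimage {n : ℕ} {w : List (Fin b)} (hw : w.length = n) :
    cylinder w = (wordPrefix · n) ⁻¹' {w} := by
  subst hw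
  ext x
  exact mem_cylinder_iff

lemma measurable_of_wordPrefix {α β : Type*} [MeasurableSpace α] [MeasurableSpace β]
    {f : List (Fin b) → α → β} (hf : ∀ w, Measurable (f w)) (n : ℕ) :
    Measurable fun p : α × SymbSpace b => f (wordPrefix p.2 n) p.1 := by
  have joint : Measurable fun p : α × (Fin n → Fin b) => f (List.ofFn p.2) p.1 :=
    measurable_from_prod_countable_left fun u => hf (List.ofFn u)
  have trunc : Measurable fun x : SymbSpace b => fun i : Fin n => x i :=
    measurable_pi_lambda _ fun i => measurable_pi_apply (i : ℕ)
  exact joint.comp (measurable_fst.prodMk (trunc.comp measurable_snd))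

lemma measurable_comp_wordPrefix {β : Type*} [MeasurableSpace β] (f : List (Fin b) → β) (n : ℕ) :
    Measurable fun x : SymbSpace b => f (wordPrefix x n) :=
  (measurable_of_wordPrefix (α := Unit) (f := fun w _ => f w) (fun _ => measurable_const) n).comp
    (measurable_prodMk_left (x := ()))

lemma measurableSet_cylinder (w : List (Fin b)) : MeasurableSet (cylinder w) := by
  rw [cylinder_eq_preimage rfl]
  exact measurableSet_setOfPred.2 (measurable_comp_wordPrefix (fun u => u = w) w.length)

/-- The finite set of words of length `n`. -/
def words (b n : ℕ) : Finset (List (Fin b)) :=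
  (List.finite_length_eq (Fin b) n).toFinset

lemma mem_words {n : ℕ} {w : List (Fin b)} : w ∈ words b n ↔ w.length = n := by
  simp [words]

open scoped Classical in
lemma measure_setOf_wordPrefix (μ : Measure (SymbSpace b)) (p : List (Fin b) → Prop) (n : ℕ) :
    μ {x | p (wordPrefix x n)} = ∑ w ∈ words b n with p w, μ (cylinder w) := by
  have hcyl : ∀ w ∈ {w ∈ words b n | p w}, cylinder w = (wordPrefix · n) ⁻¹' {w} :=
    fun w hw => cylinder_eq_preimage (mem_words.1 (Finset.mem_filter.1 hw).1)
  rw [Finset.sum_congr rfl fun w hw => congrArg μ (hcyl w hw),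
    sum_measure_preimage_singleton _ fun w hw => hcyl w hw ▸ measurableSet_cylinder w]
  congr 1
  ext x
  simp [mem_words, length_wordPrefix]

lemma measure_le_of_forall_cylinder {μ ρ : Measure (SymbSpace b)} {n : ℕ}
    (p : List (Fin b) → Prop) {c : ℝ≥0∞} (h : ∀ w, p w → μ (cylinder w) ≤ c * ρ (cylinder w)) :
    μ {x | p (wordPrefix x n)} ≤ c * ρ univ := by
  classical
  calc μ {x | p (wordPrefix x n)}
      ≤ ∑ w ∈ words b n with p w, c * ρ (cylinder w) := by
        rw [measure_setOf_wordPrefix]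
        exact Finset.sum_le_sum fun w hw => h w (Finset.mem_filter.1 hw).2
    _ = c * ρ {x | p (wordPrefix x n)} := by rw [measure_setOf_wordPrefix, Finset.mul_sum]
    _ ≤ c * ρ univ := by gcongr; exact subset_univ _

lemma ae_measure_cylinder_wordPrefix_ne_zero (μ : Measure (SymbSpace b)) :
    ∀ᵐ x ∂μ, ∀ n, μ (cylinder (wordPrefix x n)) ≠ 0 := by
  refine ae_all_iff.2 fun n => ?_
  simpa [ae_iff] using measure_le_of_forall_cylinder (μ := μ) (ρ := 0) (n := n)
    (fun w => μ (cylinder w) = 0) (c := 0) fun w hw => by simp [hw]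

end Words

/-! ### Exponential windows -/

section ExpWindow

/-- The real exponential with values in `ℝ≥0∞`, in which all masses and weights are measured. -/
def eexp (t : ℝ) : ℝ≥0∞ := ENNReal.ofReal (Real.exp t)

lemma eexp_add (s t : ℝ) : eexp (s + t) = eexp s * eexp t := by
  rw [eexp, Real.exp_add, ENNReal.ofReal_mul (Real.exp_nonneg s), eexp, eexp]

lemma eexp_nat_mul (n : ℕ) (t : ℝ) : eexp (n * t) = eexp t ^ n := by
  rw [eexp, Real.exp_nat_mul, ENNReal.ofReal_pow (Real.exp_nonneg t), eexp]

lemma eexp_neg (t : ℝ) : eexp (-t) = (eexp t)⁻¹ := by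
  rw [eexp, Real.exp_neg, ENNReal.ofReal_inv_of_pos (Real.exp_pos t), eexp]

lemma eexp_ne_zero (t : ℝ) : eexp t ≠ 0 := by
  simpa [eexp] using Real.exp_pos t

lemma eexp_ne_top (t : ℝ) : eexp t ≠ ∞ := ENNReal.ofReal_ne_top

lemma eexp_lt_one {t : ℝ} (ht : t < 0) : eexp t < 1 := by
  simpa [eexp] using ht

@[gcongr]
lemma eexp_le_eexp {s t : ℝ} (h : s ≤ t) : eexp s ≤ eexp t :=
  ENNReal.ofReal_le_ofReal (Real.exp_le_exp.2 h)

lemma sum_Icc_pow_le (r : ℝ≥0∞) (n k : ℕ) : ∑ m ∈ Finset.Icc n k, r ^ m ≤ r ^ n * (1 - r)⁻¹ :=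
  calc ∑ m ∈ Finset.Icc n k, r ^ m
      = ∑ m ∈ Finset.range (k + 1 - n), r ^ n * r ^ m := by
        rw [← Finset.Ico_add_one_right_eq_Icc, Finset.sum_Ico_eq_sum_range]
        simp only [pow_add]
    _ ≤ ∑' m, r ^ n * r ^ m := ENNReal.sum_le_tsum _
    _ = r ^ n * (1 - r)⁻¹ := by rw [ENNReal.tsum_mul_left, ENNReal.tsum_geometric]

/-- The values that a sequence of exponential growth rate `c` may take at time `n`, up to an
error `ε` on the rate and a factor `exp a`. -/
def expWindow (c ε a : ℝ) (n : ℕ) : Set ℝ≥0∞ :=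
  Icc (eexp (n * (c - ε) - a)) (eexp (n * (c + ε) + a))

variable {c ε a : ℝ} {n : ℕ}

lemma isClosed_expWindow : IsClosed (expWindow c ε a n) := isClosed_Icc

lemma expWindow_subset_expWindow {ε' a' : ℝ} (hε : ε ≤ ε') (ha : a ≤ a') :
    expWindow c ε a n ⊆ expWindow c ε' a' n :=
  Icc_subset_Icc (by gcongr) (by gcongr)

lemma mem_expWindow_iff {v : ℝ≥0∞} (h0 : v ≠ 0) (htop : v ≠ ∞) :
    v ∈ expWindow c ε a n ↔ |Real.log v.toReal - n * c| ≤ n * ε + a := by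
  have hv : 0 < v.toReal := ENNReal.toReal_pos h0 htop
  rw [expWindow, mem_Icc, eexp, eexp, ENNReal.ofReal_le_iff_le_toReal htop,
    ENNReal.le_ofReal_iff_toReal_le htop (Real.exp_nonneg _), ← Real.le_log_iff_exp_le hv,
    ← Real.log_le_iff_le_exp hv, abs_le]
  constructor <;> rintro ⟨hl, hu⟩ <;> constructor <;> linarith

lemma ne_zero_of_mem_expWindow {v : ℝ≥0∞} (hv : v ∈ expWindow c ε a n) : v ≠ 0 :=
  fun h => eexp_ne_zero _ (le_zero_iff.1 (h ▸ hv.1))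

lemma ne_top_of_mem_expWindow {v : ℝ≥0∞} (hv : v ∈ expWindow c ε a n) : v ≠ ∞ :=
  ne_top_of_le_ne_top (eexp_ne_top _) hv.2

lemma exists_nat_forall_abs_sub_le {u : ℕ → ℝ} (hε : 0 < ε)
    (hu : Tendsto (fun n => u n / n) atTop (nhds c)) :
    ∃ M : ℕ, ∀ n : ℕ, |u n - n * c| ≤ n * ε + M := by
  have eventually_le : ∀ᶠ n : ℕ in atTop, |u n - n * c| - n * ε ≤ 0 := by
    filter_upwards [hu.eventually (Metric.closedBall_mem_nhds c hε), eventually_gt_atTop 0]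
      with n hn hpos
    have hn0 : (0 : ℝ) < n := Nat.cast_pos.2 hpos
    have hdiv : u n - n * c = n * (u n / n - c) := by field_simp
    rw [Real.dist_eq] at hn
    rw [sub_nonpos, hdiv, abs_mul, abs_of_pos hn0]
    gcongr
  obtain ⟨B, hB⟩ := (isBoundedUnder_of_eventually_le eventually_le).bddAbove_range
  obtain ⟨M, hM⟩ := exists_nat_ge B
  exact ⟨M, fun n => by linarith [hB (mem_range_self n)]⟩

lemma exists_forall_mem_expWindow {v : ℕ → ℝ≥0∞} (hε : 0 < ε) (h0 : ∀ n, v n ≠ 0)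
    (htop : ∀ n, v n ≠ ∞)
    (hv : Tendsto (fun n => Real.log (v n).toReal / n) atTop (nhds c)) :
    ∃ M : ℕ, ∀ n, v n ∈ expWindow c ε M n :=
  (exists_nat_forall_abs_sub_le hε hv).imp fun _ hM n =>
    (mem_expWindow_iff (h0 n) (htop n)).2 (hM n)

lemma tendsto_log_div_of_mem_expWindow {v : ℕ → ℝ≥0∞}
    (hv : ∀ j : ℕ, ∀ᶠ n in atTop, v n ∈ expWindow c (1 / (j + 1)) 0 n) :
    Tendsto (fun n => Real.log (v n).toReal / n) atTop (nhds c) := by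
  refine Metric.tendsto_atTop'.2 fun δ hδ => ?_
  obtain ⟨j, hj⟩ := exists_nat_one_div_lt hδ
  obtain ⟨N, hN⟩ := eventually_atTop.1 (hv j)
  refine ⟨N, fun n hn => ?_⟩
  have hn0 : (0 : ℝ) < n := Nat.cast_pos.2 (Nat.zero_lt_of_lt hn)
  have hmem := hN n hn.le
  rw [mem_expWindow_iff (ne_zero_of_mem_expWindow hmem) (ne_top_of_mem_expWindow hmem),
    add_zero] at hmem
  calc dist (Real.log (v n).toReal / n) c
      = |Real.log (v n).toReal - n * c| / n := by
        rw [Real.dist_eq, ← abs_of_pos hn0, ← abs_div, abs_of_pos hn0]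
        congr 1
        field_simp
    _ ≤ 1 / (j + 1) := (div_le_iff₀' hn0).2 hmem
    _ < δ := hj

lemma tendsto_measure_exists_notMem_expWindow {α : Type*} [MeasurableSpace α] {μ : Measure α}
    [IsFiniteMeasure μ] {v : ℕ → α → ℝ≥0∞} (hv : ∀ n, Measurable (v n))
    (hwin : ∀ᵐ x ∂μ, ∃ M : ℕ, ∀ n, v n x ∈ expWindow c ε M n) :
    Tendsto (fun M : ℕ => μ {x | ∃ n, v n x ∉ expWindow c ε M n}) atTop (nhds 0) := by
  have hinter : μ (⋂ M : ℕ, {x | ∃ n, v n x ∉ expWindow c ε M n}) = 0 := by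
    simpa [ae_iff, ofPred_forall] using hwin
  rw [← hinter]
  refine tendsto_measure_iInter_atTop (fun M => ?_) (fun M N hMN x => ?_)
    ⟨0, measure_ne_top _ _⟩
  · simp only [ofPred_exists]
    exact (MeasurableSet.iUnion fun n =>
      hv n isClosed_expWindow.measurableSet.compl).nullMeasurableSet
  · exact Exists.imp fun n => mt fun h =>
      expWindow_subset_expWindow le_rfl (Nat.cast_le.2 hMN) h

end ExpWindow

/-! ### Fatou's lemma for random measures -/

section Fatou

variable {b : ℕ} {U : ℕ → Set ℝ≥0∞} {n₀ n₁ : ℕ}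

/-- The points `x` for which some cylinder `[x|_n]` with `n₀ ≤ n ≤ n₁` has a `μ`-mass lying in the
set `U n` of exceptional values. -/
def hitSet (μ : Measure (SymbSpace b)) (U : ℕ → Set ℝ≥0∞) (n₀ n₁ : ℕ) : Set (SymbSpace b) :=
  {x | ∃ n ∈ Icc n₀ n₁, μ (cylinder (wordPrefix x n)) ∈ U n}

lemma hitSet_eq_setOf_wordPrefix (μ : Measure (SymbSpace b)) :
    hitSet μ U n₀ n₁ =
      {x | ∃ n ∈ Icc n₀ n₁, μ (cylinder ((wordPrefix x n₁).take n)) ∈ U n} := by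
  ext x
  exact exists_congr fun n => and_congr_right fun hn => by rw [take_wordPrefix x hn.2]

lemma monotone_hitSet (μ : Measure (SymbSpace b)) : Monotone (hitSet μ U n₀) :=
  fun _ _ h _ ⟨n, hn, hU⟩ => ⟨n, ⟨hn.1, hn.2.trans h⟩, hU⟩

lemma measure_frequently_le_iSup_hitSet (μ : Measure (SymbSpace b)) (n₀ : ℕ) :
    μ {x | ∃ᶠ n in atTop, μ (cylinder (wordPrefix x n)) ∈ U n} ≤
      ⨆ n₁, μ (hitSet μ U n₀ n₁) := by
  rw [← (monotone_hitSet μ).measure_iUnion]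
  refine measure_mono fun x hx => ?_
  obtain ⟨n, hn, hU⟩ := frequently_atTop.1 hx n₀
  exact mem_iUnion.2 ⟨n, n, ⟨hn, le_rfl⟩, hU⟩

lemma measurable_measure_hitSet {Ω : Type*} [MeasurableSpace Ω] {μ : Ω → Measure (SymbSpace b)}
    (hμ : ∀ w, Measurable fun ω => μ ω (cylinder w)) (hU : ∀ n, MeasurableSet (U n))
    (n₀ n₁ : ℕ) : Measurable fun ω => μ ω (hitSet (μ ω) U n₀ n₁) := by
  classical
  let hits (ω : Ω) (w : List (Fin b)) : Prop := ∃ n ∈ Icc n₀ n₁, μ ω (cylinder (w.take n)) ∈ U n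
  have hsum (ω : Ω) : μ ω (hitSet (μ ω) U n₀ n₁) =
      ∑ w ∈ words b n₁, if hits ω w then μ ω (cylinder w) else 0 := by
    rw [hitSet_eq_setOf_wordPrefix, measure_setOf_wordPrefix _ (hits ω), Finset.sum_filter]
  simp only [hsum]
  refine Finset.measurable_sum _ fun w _ => Measurable.ite ?_ (hμ w) measurable_const
  simp only [hits, ofPred_exists, ofPred_and]
  exact MeasurableSet.iUnion fun n => (MeasurableSet.const _).inter (hμ _ (hU n))

section Limit

variable {ι : Type*} {l : Filter ι} {μs : ι → Measure (SymbSpace b)} {μ : Measure (SymbSpace b)}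

lemma tendsto_measure_setOf_wordPrefix
    (hlim : ∀ w, Tendsto (fun k => μs k (cylinder w)) l (nhds (μ (cylinder w))))
    (p : List (Fin b) → Prop) (n : ℕ) :
    Tendsto (fun k => μs k {x | p (wordPrefix x n)}) l (nhds (μ {x | p (wordPrefix x n)})) := by
  classical
  simp only [measure_setOf_wordPrefix]
  exact tendsto_finsetSum _ fun w _ => hlim w

lemma eventually_hitSet_subset (hU : ∀ n, IsOpen (U n))
    (hlim : ∀ w, Tendsto (fun k => μs k (cylinder w)) l (nhds (μ (cylinder w)))) :
    ∀ᶠ k in l, hitSet μ U n₀ n₁ ⊆ hitSet (μs k) U n₀ n₁ := by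
  have words_eventually : ∀ᶠ k in l, ∀ w ∈ {w : List (Fin b) | w.length ≤ n₁},
      μ (cylinder w) ∈ U w.length → μs k (cylinder w) ∈ U w.length :=
    (List.finite_length_le (Fin b) n₁).eventually_all.2 fun w _ =>
      eventually_imp_distrib_left.2 fun hw => hlim w ((hU _).mem_nhds hw)
  filter_upwards [words_eventually] with k hk x ⟨n, hn, hx⟩
  have hword := hk (wordPrefix x n) (by simpa [length_wordPrefix] using hn.2)
  rw [length_wordPrefix] at hword
  exact ⟨n, hn, hword hx⟩

lemma measure_hitSet_le_liminf [l.NeBot] (hU : ∀ n, IsOpen (U n))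
    (hlim : ∀ w, Tendsto (fun k => μs k (cylinder w)) l (nhds (μ (cylinder w)))) (n₀ n₁ : ℕ) :
    μ (hitSet μ U n₀ n₁) ≤ liminf (fun k => μs k (hitSet (μs k) U n₀ n₁)) l := by
  have htendsto : Tendsto (fun k => μs k (hitSet μ U n₀ n₁)) l (nhds (μ (hitSet μ U n₀ n₁))) := by
    rw [hitSet_eq_setOf_wordPrefix]
    exact tendsto_measure_setOf_wordPrefix hlim
      (fun w => ∃ n ∈ Icc n₀ n₁, μ (cylinder (w.take n)) ∈ U n) n₁
  rw [← htendsto.liminf_eq]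
  exact liminf_le_liminf ((eventually_hitSet_subset hU hlim).mono fun k hk => measure_mono hk)

end Limit

lemma ae_ae_eventually_notMem_of_lintegral_hitSet_le {Ω : Type*} [MeasurableSpace Ω]
    {P : Measure Ω} {μs : ℕ → Ω → Measure (SymbSpace b)} {μ : Ω → Measure (SymbSpace b)}
    (hμs : ∀ k w, Measurable fun ω => μs k ω (cylinder w)) (hU : ∀ n, IsOpen (U n))
    (hlim : ∀ᵐ ω ∂P, ∀ w, Tendsto (fun k => μs k ω (cylinder w)) atTop (nhds (μ ω (cylinder w))))
    (hsmall : ∀ η : ℝ≥0∞, 0 < η → ∃ n₀, ∀ n₁, ∀ᶠ k in atTop,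
      ∫⁻ ω, μs k ω (hitSet (μs k ω) U n₀ n₁) ∂P ≤ η) :
    ∀ᵐ ω ∂P, ∀ᵐ x ∂μ ω, ∀ᶠ n in atTop, μ ω (cylinder (wordPrefix x n)) ∉ U n := by
  let mass (n₀ n₁ k : ℕ) (ω : Ω) : ℝ≥0∞ := μs k ω (hitSet (μs k ω) U n₀ n₁)
  let limMass (n₀ : ℕ) (ω : Ω) : ℝ≥0∞ := ⨆ n₁, liminf (fun k => mass n₀ n₁ k ω) atTop
  have mass_meas (n₀ n₁ k : ℕ) : Measurable (mass n₀ n₁ k) :=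
    measurable_measure_hitSet (hμs k) (fun n => (hU n).measurableSet) n₀ n₁
  have liminf_meas (n₀ n₁ : ℕ) : Measurable fun ω => liminf (fun k => mass n₀ n₁ k ω) atTop :=
    Measurable.liminf (mass_meas n₀ n₁)
  have lintegral_limMass_le (η : ℝ≥0∞) (hη : 0 < η) : ∃ n₀, ∫⁻ ω, limMass n₀ ω ∂P ≤ η := by
    obtain ⟨n₀, hn₀⟩ := hsmall η hη
    refine ⟨n₀, ?_⟩
    rw [lintegral_iSup (liminf_meas n₀) fun m n hmn ω => liminf_le_liminf
      (Eventually.of_forall fun k => measure_mono (monotone_hitSet _ hmn))]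
    refine iSup_le fun n₁ => (lintegral_liminf_le (mass_meas n₀ n₁)).trans ?_
    exact (liminf_le_liminf (hn₀ n₁)).trans (liminf_const η).le
  have iInf_limMass : ∫⁻ ω, ⨅ n₀, limMass n₀ ω ∂P = 0 := by
    refine le_zero_iff.1 (le_of_forall_pos_le_add fun η hη => ?_)
    obtain ⟨n₀, hn₀⟩ := lintegral_limMass_le η hη
    rw [zero_add]
    exact (lintegral_mono fun ω => iInf_le _ n₀).trans hn₀
  rw [lintegral_eq_zero_iff (Measurable.iInf fun n₀ => Measurable.iSup (liminf_meas n₀))]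
    at iInf_limMass
  filter_upwards [hlim, iInf_limMass] with ω hω hzero
  have frequently_null : μ ω {x | ∃ᶠ n in atTop, μ ω (cylinder (wordPrefix x n)) ∈ U n} = 0 := by
    refine le_zero_iff.1 ((le_iInf fun n₀ => ?_).trans hzero.le)
    exact (measure_frequently_le_iSup_hitSet (μ ω) n₀).trans
      (iSup_mono fun n₁ => measure_hitSet_le_liminf hU hω n₀ n₁)
  simpa [ae_iff, Filter.Frequently] using frequently_null

end Fatou

/-! ### Cascade measures -/

section CascadeDensity

variable {b : ℕ} {Ω : Type*}

/-- The density `Q_k` of the `k`-th approximation of the cascade with weights `W`: the product of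
the weights of the first `k` nonempty prefixes of `x`. -/
def cascadeDensity (W : List (Fin b) → Ω → ℝ≥0∞) (k : ℕ) (ω : Ω) (x : SymbSpace b) : ℝ≥0∞ :=
  ∏ i ∈ Finset.range k, W (wordPrefix x (i + 1)) ω

/-- The `k`-th approximation `Q_k · ν` of the limit measure of the cascade. -/
def cascadeMeasure (W : List (Fin b) → Ω → ℝ≥0∞) (ν : Measure (SymbSpace b)) (k : ℕ) (ω : Ω) :
    Measure (SymbSpace b) :=
  ν.withDensity (cascadeDensity W k ω)

variable {W : List (Fin b) → Ω → ℝ≥0∞}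

lemma cascadeDensity_congr {x y : SymbSpace b} {n : ℕ} (h : wordPrefix y n = wordPrefix x n)
    (ω : Ω) : cascadeDensity W n ω y = cascadeDensity W n ω x :=
  Finset.prod_congr rfl fun i hi => by
    rw [wordPrefix_eq_of_le (Nat.succ_le_of_lt (Finset.mem_range.1 hi)) h]

lemma cascadeDensity_eq_mul_prod_Ico {m k : ℕ} (hmk : m ≤ k) (ω : Ω) (x : SymbSpace b) :
    cascadeDensity W k ω x =
      cascadeDensity W m ω x * ∏ i ∈ Finset.Ico m k, W (wordPrefix x (i + 1)) ω :=
  (Finset.prod_range_mul_prod_Ico _ hmk).symm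

lemma cascadeMeasure_cylinder_wordPrefix (ν : Measure (SymbSpace b)) (n : ℕ) (ω : Ω)
    (x : SymbSpace b) :
    cascadeMeasure W ν n ω (cylinder (wordPrefix x n)) =
      cascadeDensity W n ω x * ν (cylinder (wordPrefix x n)) := by
  rw [cascadeMeasure, withDensity_apply _ (measurableSet_cylinder _),
    setLIntegral_congr_fun (measurableSet_cylinder _)
      fun y hy => cascadeDensity_congr (mem_cylinder_wordPrefix.1 hy) ω, setLIntegral_const]

variable [MeasurableSpace Ω] {ν : Measure (SymbSpace b)}

lemma measurable_cascadeDensity (hW : ∀ w, Measurable (W w)) (k : ℕ) :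
    Measurable fun p : Ω × SymbSpace b => cascadeDensity W k p.1 p.2 :=
  Finset.measurable_prod _ fun _ _ => measurable_of_wordPrefix hW _

lemma measurable_cascadeDensity_left (hW : ∀ w, Measurable (W w)) (k : ℕ) (x : SymbSpace b) :
    Measurable fun ω => cascadeDensity W k ω x :=
  (measurable_cascadeDensity hW k).comp measurable_prodMk_right

lemma measurable_cascadeMeasure_apply [SFinite ν] (hW : ∀ w, Measurable (W w)) (k : ℕ)
    {s : Set (SymbSpace b)} (hs : MeasurableSet s) :
    Measurable fun ω => cascadeMeasure W ν k ω s := by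
  simp only [cascadeMeasure, withDensity_apply _ hs]
  exact (measurable_cascadeDensity hW k).lintegral_prod_right'

end CascadeDensity

section Peyriere

variable {b : ℕ} {Ω : Type*} [MeasurableSpace Ω]

/-- The law of the cascade size-biased along the spine `x`, which has density `Q_k(·, x)`
with respect to `P`. -/
def spineMeasure (P : Measure Ω) (W : List (Fin b) → Ω → ℝ≥0∞) (k : ℕ) (x : SymbSpace b) :
    Measure Ω :=
  P.withDensity (cascadeDensity W k · x)

/-- The `k`-th Peyrière measure on pairs `(ω, x)`, which has density `Q_k(ω, x)` with respect to
`P × ν`. -/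
def peyriereMeasure (P : Measure Ω) (W : List (Fin b) → Ω → ℝ≥0∞) (ν : Measure (SymbSpace b))
    (k : ℕ) : Measure (Ω × SymbSpace b) :=
  (P.prod ν).withDensity fun p => cascadeDensity W k p.1 p.2

variable {P : Measure Ω} {ν : Measure (SymbSpace b)} [SFinite ν]
  {W : List (Fin b) → Ω → ℝ≥0∞} {S : Set (Ω × SymbSpace b)}

lemma peyriereMeasure_apply_eq_lintegral_cascadeMeasure (hW : ∀ w, Measurable (W w)) (k : ℕ)
    (hS : MeasurableSet S) :
    peyriereMeasure P W ν k S = ∫⁻ ω, cascadeMeasure W ν k ω {x | (ω, x) ∈ S} ∂P := by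
  rw [peyriereMeasure, withDensity_apply _ hS, ← lintegral_indicator hS,
    lintegral_prod _ ((measurable_cascadeDensity hW k).indicator hS).aemeasurable]
  refine lintegral_congr fun ω => ?_
  have hSω : MeasurableSet {x | (ω, x) ∈ S} := measurable_prodMk_left hS
  rw [cascadeMeasure, withDensity_apply _ hSω, ← lintegral_indicator hSω]
  rfl

lemma peyriereMeasure_apply_eq_lintegral_spineMeasure [SFinite P]
    (hW : ∀ w, Measurable (W w)) (k : ℕ) (hS : MeasurableSet S) :
    peyriereMeasure P W ν k S = ∫⁻ x, spineMeasure P W k x {ω | (ω, x) ∈ S} ∂ν := by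
  rw [peyriereMeasure, withDensity_apply _ hS, ← lintegral_indicator hS,
    lintegral_prod_symm _ ((measurable_cascadeDensity hW k).indicator hS).aemeasurable]
  refine lintegral_congr fun x => ?_
  have hSx : MeasurableSet {ω | (ω, x) ∈ S} := measurable_prodMk_right hS
  rw [spineMeasure, withDensity_apply _ hSx, ← lintegral_indicator hSx]
  rfl

end Peyriere

section IsCascade

variable {b : ℕ} {Ω : Type*} [MeasurableSpace Ω]

/-- A Mandelbrot cascade with weights in `ℝ≥0∞`: the weights of the nonempty words are independent
with common law `ρ` of mean `1`. -/
structure IsCascade (P : Measure Ω) (W : List (Fin b) → Ω → ℝ≥0∞) (ρ : Measure ℝ≥0∞) : Prop where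
  measurable : ∀ w, Measurable (W w)
  iIndepFun : iIndepFun (fun w : {w : List (Fin b) // w ≠ []} => W w) P
  map_eq : ∀ w, w ≠ [] → P.map (W w) = ρ
  lintegral_eq_one : ∫⁻ t, t ∂ρ = 1

namespace IsCascade

variable {P : Measure Ω} {W : List (Fin b) → Ω → ℝ≥0∞} {ρ : Measure ℝ≥0∞}

lemma isProbabilityMeasure (hW : IsCascade P W ρ) : IsProbabilityMeasure P :=
  hW.iIndepFun.isProbabilityMeasure

lemma iIndepFun_comp (hW : IsCascade P W ρ) {ι : Type*} {g : ι → List (Fin b)}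
    (hg : g.Injective) (hne : ∀ i, g i ≠ []) : ProbabilityTheory.iIndepFun (fun i => W (g i)) P :=
  hW.iIndepFun.precomp (g := fun i => ⟨g i, hne i⟩) fun _ _ h => hg (Subtype.ext_iff.1 h)

lemma lintegral_prod_eq_one (hW : IsCascade P W ρ) {ι : Type*} {s : Finset ι}
    {g : ι → List (Fin b)} (hg : InjOn g s) (hne : ∀ i ∈ s, g i ≠ []) :
    ∫⁻ ω, ∏ i ∈ s, W (g i) ω ∂P = 1 := by
  have hindep := hW.iIndepFun_comp (g := fun i : s => g i) hg.injective fun i => hne i i.2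
  calc ∫⁻ ω, ∏ i ∈ s, W (g i) ω ∂P
      = ∫⁻ ω, ∏ i : s, W (g i) ω ∂P :=
        lintegral_congr fun ω => (Finset.prod_coe_sort s fun i => W (g i) ω).symm
    _ = ∏ i : s, ∫⁻ ω, W (g i) ω ∂P :=
        lintegral_prod_eq_prod_lintegral_of_indepFun _ _ hindep fun i => hW.measurable _
    _ = 1 := Finset.prod_eq_one fun i _ => by
        rw [← hW.lintegral_eq_one, ← hW.map_eq _ (hne i i.2)]
        exact (lintegral_map measurable_id (hW.measurable _)).symm

lemma lintegral_cascadeDensity (hW : IsCascade P W ρ) (k : ℕ) (x : SymbSpace b) :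
    ∫⁻ ω, cascadeDensity W k ω x ∂P = 1 :=
  hW.lintegral_prod_eq_one (g := fun i => wordPrefix x (i + 1))
    ((wordPrefix_injective x).comp (add_left_injective 1)).injOn
    fun i _ => wordPrefix_succ_ne_nil x i

lemma spineMeasure_univ (hW : IsCascade P W ρ) (k : ℕ) (x : SymbSpace b) :
    spineMeasure P W k x univ = 1 := by
  rw [spineMeasure, withDensity_apply _ MeasurableSet.univ, Measure.restrict_univ,
    hW.lintegral_cascadeDensity]

lemma peyriereMeasure_preimage_snd (hW : IsCascade P W ρ) {ν : Measure (SymbSpace b)} [SFinite ν]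
    (k : ℕ) {s : Set (SymbSpace b)} (hs : MeasurableSet s) :
    peyriereMeasure P W ν k (Prod.snd ⁻¹' s) = ν s := by
  have := hW.isProbabilityMeasure
  rw [peyriereMeasure_apply_eq_lintegral_spineMeasure hW.measurable k (measurable_snd hs),
    ← lintegral_indicator_one hs]
  refine lintegral_congr fun x => ?_
  by_cases hx : x ∈ s <;> simp [hx, hW.spineMeasure_univ]

lemma lintegral_cascadeMeasure_univ (hW : IsCascade P W ρ) (ν : Measure (SymbSpace b)) [SFinite ν]
    (k : ℕ) : ∫⁻ ω, cascadeMeasure W ν k ω univ ∂P = ν univ := by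
  have := hW.isProbabilityMeasure
  simpa using (peyriereMeasure_apply_eq_lintegral_cascadeMeasure (ν := ν) hW.measurable k
    MeasurableSet.univ).symm.trans (hW.peyriereMeasure_preimage_snd k MeasurableSet.univ)

end IsCascade

end IsCascade

/-! ### Size-biasing -/

section SizeBiased

/-- The size-biased version `t ρ(dt)` of a law `ρ`. -/
def sizeBiased (ρ : Measure ℝ≥0∞) : Measure ℝ≥0∞ := ρ.withDensity id

variable {ρ : Measure ℝ≥0∞}

lemma isProbabilityMeasure_sizeBiased (hρ : ∫⁻ t, t ∂ρ = 1) :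
    IsProbabilityMeasure (sizeBiased ρ) :=
  ⟨by simpa [sizeBiased] using hρ⟩

lemma ae_sizeBiased_ne_zero : ∀ᵐ t ∂sizeBiased ρ, t ≠ 0 :=
  (ae_withDensity_iff measurable_id).2 (Eventually.of_forall fun _ h => h)

lemma ae_sizeBiased_ne_top (hρ : ∫⁻ t, t ∂ρ ≠ ∞) : ∀ᵐ t ∂sizeBiased ρ, t ≠ ∞ :=
  withDensity_absolutelyContinuous ρ id
    ((ae_lt_top measurable_id hρ).mono fun _ h => h.ne)

lemma map_withDensity_prod_eq_pi_sizeBiased {Ω ι : Type*} [MeasurableSpace Ω] [Fintype ι]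
    {P : Measure Ω} {V : ι → Ω → ℝ≥0∞} (hV : ∀ i, Measurable (V i)) (hindep : iIndepFun V P)
    [∀ i, SigmaFinite (sizeBiased (P.map (V i)))] :
    (P.withDensity fun ω => ∏ i, V i ω).map (fun ω i => V i ω) =
      Measure.pi fun i => sizeBiased (P.map (V i)) := by
  refine (Measure.pi_eq fun s hs => ?_).symm
  have hbox : MeasurableSet {ω | ∀ i, V i ω ∈ s i} := by
    rw [ofPred_forall]
    exact MeasurableSet.iInter fun i => hV i (hs i)
  have hind (i : ι) : Measurable ((s i).indicator (id : ℝ≥0∞ → ℝ≥0∞)) :=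
    measurable_id.indicator (hs i)
  have indicator_eq_prod (ω : Ω) : {ω | ∀ i, V i ω ∈ s i}.indicator (fun ω => ∏ i, V i ω) ω =
      ∏ i, (s i).indicator id (V i ω) := by
    by_cases hω : ∀ i, V i ω ∈ s i
    · simp [hω]
    · obtain ⟨i, hi⟩ := not_forall.1 hω
      rw [indicator_of_notMem (by exact hω), Finset.prod_eq_zero (Finset.mem_univ i)]
      simp [hi]
  calc (P.withDensity fun ω => ∏ i, V i ω).map (fun ω i => V i ω) (univ.pi s)
      = (P.withDensity fun ω => ∏ i, V i ω) {ω | ∀ i, V i ω ∈ s i} := by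
        rw [Measure.map_apply (measurable_pi_lambda _ hV) (MeasurableSet.univ_pi hs)]
        congr 1
        ext ω
        simp
    _ = ∫⁻ ω, ∏ i, (s i).indicator id (V i ω) ∂P := by
        rw [withDensity_apply _ hbox, ← lintegral_indicator hbox]
        exact lintegral_congr indicator_eq_prod
    _ = ∏ i, ∫⁻ ω, (s i).indicator id (V i ω) ∂P :=
        lintegral_prod_eq_prod_lintegral_of_indepFun _ _ (hindep.comp _ hind)
          fun i => (hind i).comp (hV i)
    _ = ∏ i, sizeBiased (P.map (V i)) (s i) := Finset.prod_congr rfl fun i _ => by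
        rw [sizeBiased, withDensity_apply _ (hs i), ← lintegral_indicator (hs i),
          lintegral_map (hind i) (hV i)]

lemma ae_tendsto_log_prod_div {σ : Measure ℝ≥0∞} [IsProbabilityMeasure σ]
    (h0 : ∀ᵐ t ∂σ, t ≠ 0) (htop : ∀ᵐ t ∂σ, t ≠ ∞)
    (hlog : Integrable (fun t => Real.log t.toReal) σ) :
    ∀ᵐ t ∂Measure.infinitePi fun _ : ℕ => σ,
      (∀ i, t i ≠ 0) ∧ (∀ i, t i ≠ ∞) ∧
      Tendsto (fun n : ℕ => Real.log (∏ i ∈ Finset.range n, t i).toReal / n) atTop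
        (nhds (∫ t, Real.log t.toReal ∂σ)) := by
  let μ : Measure (ℕ → ℝ≥0∞) := Measure.infinitePi fun _ => σ
  have eval_preserving (i : ℕ) : MeasurePreserving (fun t : ℕ → ℝ≥0∞ => t i) μ σ :=
    measurePreserving_eval_infinitePi (fun _ => σ) i
  have log_meas : Measurable fun t : ℝ≥0∞ => Real.log t.toReal :=
    Real.measurable_log.comp ENNReal.measurable_toReal
  have indep : iIndepFun (fun (i : ℕ) (t : ℕ → ℝ≥0∞) => Real.log (t i).toReal) μ :=
    iIndepFun_infinitePi (X := fun _ (t : ℝ≥0∞) => Real.log t.toReal) fun _ => log_meas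
  have ident (i : ℕ) : IdentDistrib (fun t : ℕ → ℝ≥0∞ => t i) (fun t => t 0) μ μ :=
    ⟨(eval_preserving i).aemeasurable, (eval_preserving 0).aemeasurable,
      (eval_preserving i).map_eq.trans (eval_preserving 0).map_eq.symm⟩
  have strong_law := strong_law_ae_real (μ := μ) (fun i t => Real.log (t i).toReal)
    ((eval_preserving 0).integrable_comp_of_integrable hlog)
    (fun i j hij => indep.indepFun hij) fun i => (ident i).comp log_meas
  have mean : ∫ t, Real.log (t 0).toReal ∂μ = ∫ t, Real.log t.toReal ∂σ := by
    rw [← (eval_preserving 0).map_eq, integral_map (eval_preserving 0).aemeasurable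
      log_meas.aestronglyMeasurable]
  have ae_coord {p : ℝ≥0∞ → Prop} (hp : ∀ᵐ t ∂σ, p t) : ∀ᵐ t ∂μ, ∀ i, p (t i) :=
    ae_all_iff.2 fun i => (eval_preserving i).quasiMeasurePreserving.ae hp
  filter_upwards [strong_law, ae_coord h0, ae_coord htop] with t ht h0t htopt
  refine ⟨h0t, htopt, ?_⟩
  rw [← mean]
  refine ht.congr fun n => ?_
  rw [ENNReal.toReal_prod, Real.log_prod fun i _ => ENNReal.toReal_ne_zero.2 ⟨h0t i, htopt i⟩]

lemma tendsto_infinitePi_exists_prod_notMem_expWindow {σ : Measure ℝ≥0∞} [IsProbabilityMeasure σ]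
    (h0 : ∀ᵐ t ∂σ, t ≠ 0) (htop : ∀ᵐ t ∂σ, t ≠ ∞)
    (hlog : Integrable (fun t => Real.log t.toReal) σ) {ε : ℝ} (hε : 0 < ε) :
    Tendsto (fun M : ℕ => Measure.infinitePi (fun _ : ℕ => σ)
      {t | ∃ n, ∏ i ∈ Finset.range n, t i ∉ expWindow (∫ t, Real.log t.toReal ∂σ) ε M n})
      atTop (nhds 0) := by
  refine tendsto_measure_exists_notMem_expWindow (fun n => by fun_prop) ?_
  filter_upwards [ae_tendsto_log_prod_div h0 htop hlog] with t ⟨h0t, htopt, ht⟩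
  exact exists_forall_mem_expWindow hε (fun n => Finset.prod_ne_zero_iff.2 fun i _ => h0t i)
    (fun n => ENNReal.prod_ne_top fun i _ => htopt i) ht

end SizeBiased

section Spine

variable {b : ℕ} {Ω : Type*} [MeasurableSpace Ω] {P : Measure Ω} {W : List (Fin b) → Ω → ℝ≥0∞}
  {ρ : Measure ℝ≥0∞}

lemma prod_coe_range_ite {M : Type*} [CommMonoid M] (f : ℕ → M) {j k : ℕ} (hj : j ≤ k) :
    ∏ i : Finset.range k, (if (i : ℕ) < j then f i else 1) = ∏ i ∈ Finset.range j, f i :=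
  calc ∏ i : Finset.range k, (if (i : ℕ) < j then f i else 1)
      = ∏ i ∈ Finset.range k with i < j, f i := by
        rw [Finset.prod_filter]
        exact Finset.prod_coe_sort (Finset.range k) fun i => if i < j then f i else 1
    _ = ∏ i ∈ Finset.range j, f i := by
        congr 1
        ext i
        simp only [Finset.mem_filter, Finset.mem_range]
        lia

namespace IsCascade

lemma map_spineMeasure (hW : IsCascade P W ρ) (k : ℕ) (x : SymbSpace b) :
    (spineMeasure P W k x).map (fun ω (i : Finset.range k) => W (wordPrefix x (i + 1)) ω) =
      (Measure.infinitePi fun _ : ℕ => sizeBiased ρ).map (Finset.range k).restrict := by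
  have := isProbabilityMeasure_sizeBiased hW.lintegral_eq_one
  have hmap (i : Finset.range k) : P.map (W (wordPrefix x (i + 1))) = ρ :=
    hW.map_eq _ (wordPrefix_succ_ne_nil x i)
  have hindep := hW.iIndepFun_comp (g := fun i : Finset.range k => wordPrefix x (i + 1))
    (fun i j h => Subtype.ext (Nat.succ_injective (wordPrefix_injective x h)))
    fun i => wordPrefix_succ_ne_nil x i
  have : ∀ i : Finset.range k, SigmaFinite (sizeBiased (P.map (W (wordPrefix x (i + 1))))) :=
    fun i => by rw [hmap]; infer_instance
  have hdensity : (cascadeDensity W k · x) =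
      fun ω => ∏ i : Finset.range k, W (wordPrefix x (i + 1)) ω :=
    funext fun ω => (Finset.prod_coe_sort _ fun i => W (wordPrefix x (i + 1)) ω).symm
  rw [Measure.infinitePi_map_restrict, spineMeasure, hdensity]
  simpa only [hmap] using
    map_withDensity_prod_eq_pi_sizeBiased (fun i => hW.measurable _) hindep

lemma spineMeasure_exists_cascadeDensity_mem_le (hW : IsCascade P W ρ) {U : ℕ → Set ℝ≥0∞}
    (hU : ∀ n, MeasurableSet (U n)) (k : ℕ) (x : SymbSpace b) :
    spineMeasure P W k x {ω | ∃ j ≤ k, cascadeDensity W j ω x ∈ U j} ≤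
      Measure.infinitePi (fun _ : ℕ => sizeBiased ρ)
        {t | ∃ n, ∏ i ∈ Finset.range n, t i ∈ U n} := by
  let partialProd (j : ℕ) (t : Finset.range k → ℝ≥0∞) : ℝ≥0∞ :=
    ∏ i : Finset.range k, if (i : ℕ) < j then t i else 1
  let S : Set (Finset.range k → ℝ≥0∞) := {t | ∃ j ≤ k, partialProd j t ∈ U j}
  have S_meas : MeasurableSet S := by
    have partialProd_meas (j : ℕ) : Measurable (partialProd j) := by
      refine Finset.measurable_prod _ fun i _ => ?_
      split_ifs <;> fun_prop
    simp only [S, ofPred_exists, ofPred_and]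
    exact MeasurableSet.iUnion fun j => (MeasurableSet.const _).inter (partialProd_meas j (hU j))
  have mem_S (f : ℕ → ℝ≥0∞) :
      (fun i : Finset.range k => f i) ∈ S ↔ ∃ j ≤ k, ∏ i ∈ Finset.range j, f i ∈ U j :=
    exists_congr fun j => and_congr_right fun hj => by rw [← prod_coe_range_ite f hj]
  calc spineMeasure P W k x {ω | ∃ j ≤ k, cascadeDensity W j ω x ∈ U j}
      = (spineMeasure P W k x).map
          (fun ω (i : Finset.range k) => W (wordPrefix x (i + 1)) ω) S := by
        rw [Measure.map_apply (measurable_pi_lambda _ fun i => hW.measurable _) S_meas]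
        congr 1
        ext ω
        exact (mem_S fun i => W (wordPrefix x (i + 1)) ω).symm
    _ = Measure.infinitePi (fun _ : ℕ => sizeBiased ρ) ((Finset.range k).restrict ⁻¹' S) := by
        rw [hW.map_spineMeasure, Measure.map_apply (Finset.measurable_restrict _) S_meas]
    _ ≤ _ := measure_mono fun t ht => ((mem_S t).1 ht).imp fun _ h => h.2

end IsCascade

end Spine

/-! ### Correlation of two branches -/

section Correlation

variable {b : ℕ} {Ω : Type*} [MeasurableSpace Ω] {P : Measure Ω} {W : List (Fin b) → Ω → ℝ≥0∞}
  {ρ : Measure ℝ≥0∞} {x y : SymbSpace b} {m k : ℕ}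

lemma exists_branching_level (x y : SymbSpace b) (k : ℕ) :
    ∃ m ≤ k, wordPrefix y m = wordPrefix x m ∧
      ∀ i ∈ Finset.Ico m k, wordPrefix y (i + 1) ≠ wordPrefix x (i + 1) := by
  classical
  refine ⟨Nat.findGreatest (fun m => wordPrefix y m = wordPrefix x m) k,
    Nat.findGreatest_le k, ?_, fun i hi => ?_⟩
  · exact Nat.findGreatest_spec (P := fun m => wordPrefix y m = wordPrefix x m) k.zero_le rfl
  · obtain ⟨hmi, hik⟩ := Finset.mem_Ico.1 hi
    exact Nat.findGreatest_is_greatest (Nat.lt_succ_of_le hmi) hik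

namespace IsCascade

lemma lintegral_prod_Ico_mul_cascadeDensity (hW : IsCascade P W ρ)
    (hbranch : ∀ i ∈ Finset.Ico m k, wordPrefix y (i + 1) ≠ wordPrefix x (i + 1)) :
    ∫⁻ ω, (∏ i ∈ Finset.Ico m k, W (wordPrefix y (i + 1)) ω) * cascadeDensity W k ω x ∂P = 1 := by
  have level_inj {u v : SymbSpace b} {i j : ℕ} (h : wordPrefix u (i + 1) = wordPrefix v (j + 1)) :
      i = j := by
    simpa only [length_wordPrefix, Nat.succ_inj] using congrArg List.length h
  have hprod := hW.lintegral_prod_eq_one (s := (Finset.Ico m k).disjSum (Finset.range k))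
    (g := Sum.elim (fun i => wordPrefix y (i + 1)) fun i => wordPrefix x (i + 1)) ?_ ?_
  · simpa only [Finset.prod_disjSum, Sum.elim_inl, Sum.elim_inr, cascadeDensity] using hprod
  · rintro (i | i) hi (j | j) hj h <;> obtain rfl := level_inj h
    · rfl
    · exact absurd h (hbranch i (Finset.inl_mem_disjSum.1 hi))
    · exact absurd h.symm (hbranch i (Finset.inl_mem_disjSum.1 hj))
    · rfl
  · rintro (i | i) -
    exacts [wordPrefix_succ_ne_nil y i, wordPrefix_succ_ne_nil x i]

-- Restricting to paths with `Q_m ≤ a` stands in for a second moment of the weights, which need not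
-- be finite: the common part of the two branches is bounded by `a`, the rest has mean `1`.
lemma setLIntegral_cascadeDensity_spineMeasure_le (hW : IsCascade P W ρ) {S : Set Ω}
    {a : ℝ≥0∞} (ha : ∀ ω ∈ S, cascadeDensity W m ω x ≤ a) (hmk : m ≤ k)
    (hm : wordPrefix y m = wordPrefix x m)
    (hbranch : ∀ i ∈ Finset.Ico m k, wordPrefix y (i + 1) ≠ wordPrefix x (i + 1)) :
    ∫⁻ ω in S, cascadeDensity W k ω y ∂spineMeasure P W k x ≤ a := by
  have hQ := measurable_cascadeDensity_left hW.measurable k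
  let tail (ω : Ω) : ℝ≥0∞ := ∏ i ∈ Finset.Ico m k, W (wordPrefix y (i + 1)) ω
  have tail_meas : Measurable tail := Finset.measurable_prod _ fun _ _ => hW.measurable _
  calc ∫⁻ ω in S, cascadeDensity W k ω y ∂spineMeasure P W k x
      ≤ ∫⁻ ω in S, a * tail ω ∂spineMeasure P W k x := by
        refine setLIntegral_mono (tail_meas.const_mul a) fun ω hω => ?_
        rw [cascadeDensity_eq_mul_prod_Ico hmk, cascadeDensity_congr hm]
        gcongr
        exact ha ω hω
    _ ≤ ∫⁻ ω, a * tail ω ∂spineMeasure P W k x := setLIntegral_le_lintegral _ _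
    _ = a * ∫⁻ ω, tail ω * cascadeDensity W k ω x ∂P := by
        rw [lintegral_const_mul _ tail_meas, spineMeasure,
          lintegral_withDensity_eq_lintegral_mul _ (hQ x) tail_meas]
        simp only [Pi.mul_apply, mul_comm]
    _ = a := by rw [hW.lintegral_prod_Ico_mul_cascadeDensity hbranch, mul_one]

lemma setLIntegral_cascadeDensity_spineMeasure_le_sum (hW : IsCascade P W ρ) {S : Set Ω}
    {a : ℕ → ℝ≥0∞} (ha : ∀ ω ∈ S, ∀ j ≤ k, cascadeDensity W j ω x ≤ a j) {n : ℕ} (hnk : n ≤ k)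
    (hy : y ∈ cylinder (wordPrefix x n)) :
    ∫⁻ ω in S, cascadeDensity W k ω y ∂spineMeasure P W k x ≤
      ∑ m ∈ Finset.Icc n k, (cylinder (wordPrefix x m)).indicator (fun _ => a m) y := by
  obtain ⟨m, hmk, hm, hbranch⟩ := exists_branching_level x y k
  have hnm : n ≤ m := by
    by_contra! hmn
    exact hbranch m (Finset.mem_Ico.2 ⟨le_rfl, hmn.trans_le hnk⟩)
      (wordPrefix_eq_of_le hmn (mem_cylinder_wordPrefix.1 hy))
  calc ∫⁻ ω in S, cascadeDensity W k ω y ∂spineMeasure P W k x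
      ≤ a m := hW.setLIntegral_cascadeDensity_spineMeasure_le (fun ω hω => ha ω hω m hmk)
        hmk hm hbranch
    _ = (cylinder (wordPrefix x m)).indicator (fun _ => a m) y :=
        (indicator_of_mem (mem_cylinder_wordPrefix.2 hm) fun _ => a m).symm
    _ ≤ _ := Finset.single_le_sum
        (f := fun m => (cylinder (wordPrefix x m)).indicator (fun _ => a m) y)
        (fun _ _ => zero_le) (Finset.mem_Icc.2 ⟨hnm, hmk⟩)

lemma setLIntegral_cascadeMeasure_cylinder_le (hW : IsCascade P W ρ) (ν : Measure (SymbSpace b))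
    [SFinite ν] {S : Set Ω} {a : ℕ → ℝ≥0∞}
    (ha : ∀ ω ∈ S, ∀ j ≤ k, cascadeDensity W j ω x ≤ a j) {n : ℕ} (hnk : n ≤ k) :
    ∫⁻ ω in S, cascadeMeasure W ν k ω (cylinder (wordPrefix x n)) ∂spineMeasure P W k x ≤
      ∑ m ∈ Finset.Icc n k, a m * ν (cylinder (wordPrefix x m)) := by
  have := hW.isProbabilityMeasure
  have : SFinite (spineMeasure P W k x) := inferInstanceAs (SFinite (P.withDensity _))
  calc ∫⁻ ω in S, cascadeMeasure W ν k ω (cylinder (wordPrefix x n)) ∂spineMeasure P W k x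
      = ∫⁻ y in cylinder (wordPrefix x n),
          ∫⁻ ω in S, cascadeDensity W k ω y ∂spineMeasure P W k x ∂ν := by
        simp only [cascadeMeasure, withDensity_apply _ (measurableSet_cylinder _)]
        exact lintegral_lintegral_swap (measurable_cascadeDensity hW.measurable k).aemeasurable
    _ ≤ ∫⁻ y in cylinder (wordPrefix x n),
          ∑ m ∈ Finset.Icc n k, (cylinder (wordPrefix x m)).indicator (fun _ => a m) y ∂ν :=
        setLIntegral_mono' (measurableSet_cylinder _) fun y hy =>
          hW.setLIntegral_cascadeDensity_spineMeasure_le_sum ha hnk hy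
    _ ≤ ∫⁻ y, ∑ m ∈ Finset.Icc n k, (cylinder (wordPrefix x m)).indicator (fun _ => a m) y ∂ν :=
        setLIntegral_le_lintegral _ _
    _ = ∑ m ∈ Finset.Icc n k, a m * ν (cylinder (wordPrefix x m)) := by
        rw [lintegral_finsetSum _ fun m _ =>
          measurable_const.indicator (measurableSet_cylinder _)]
        simp only [lintegral_indicator_const (measurableSet_cylinder _)]

end IsCascade

end Correlation

/-! ### Typical masses under the Peyrière measure -/

section Typical

variable {b : ℕ} {Ω : Type*} [MeasurableSpace Ω] {P : Measure Ω} {W : List (Fin b) → Ω → ℝ≥0∞}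
  {ρ : Measure ℝ≥0∞} {ν : Measure (SymbSpace b)}

lemma measurable_cascadeMeasure_cylinder_wordPrefix [SFinite ν] (hW : ∀ w, Measurable (W w))
    (k n : ℕ) :
    Measurable fun p : Ω × SymbSpace b =>
      cascadeMeasure W ν k p.1 (cylinder (wordPrefix p.2 n)) :=
  measurable_of_wordPrefix
    (fun w => measurable_cascadeMeasure_apply hW k (measurableSet_cylinder w)) n

lemma measurable_measure_cylinder_wordPrefix (n : ℕ) :
    Measurable fun x : SymbSpace b => ν (cylinder (wordPrefix x n)) :=
  measurable_comp_wordPrefix (fun w => ν (cylinder w)) n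

lemma measurableSet_forall_le_and_le_cascadeMeasure [SFinite ν] (hW : ∀ w, Measurable (W w))
    {a d : ℕ → ℝ≥0∞} {c : ℝ≥0∞} (n k : ℕ) :
    MeasurableSet {p : Ω × SymbSpace b | (∀ j ≤ k, cascadeDensity W j p.1 p.2 ≤ a j) ∧
      (∀ j ≤ k, ν (cylinder (wordPrefix p.2 j)) ≤ d j) ∧
      c ≤ cascadeMeasure W ν k p.1 (cylinder (wordPrefix p.2 n))} := by
  have hQ (j : ℕ) := measurable_cascadeDensity hW j
  have hν (j : ℕ) : Measurable fun p : Ω × SymbSpace b => ν (cylinder (wordPrefix p.2 j)) :=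
    (measurable_measure_cylinder_wordPrefix j).comp measurable_snd
  have hmass := measurable_cascadeMeasure_cylinder_wordPrefix (ν := ν) hW k n
  simp only [ofPred_and, ofPred_forall]
  exact (MeasurableSet.iInter fun j => MeasurableSet.iInter fun _ =>
      measurableSet_le (hQ j) measurable_const).inter
    ((MeasurableSet.iInter fun j => MeasurableSet.iInter fun _ =>
      measurableSet_le (hν j) measurable_const).inter (measurableSet_le measurable_const hmass))

namespace IsCascade

lemma peyriereMeasure_cascadeMeasure_le_mul (hW : IsCascade P W ρ) [SFinite ν] (c : ℝ≥0∞)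
    (k n : ℕ) :
    peyriereMeasure P W ν k {p | cascadeMeasure W ν k p.1 (cylinder (wordPrefix p.2 n)) ≤
      c * cascadeMeasure W ν n p.1 (cylinder (wordPrefix p.2 n))} ≤ c * ν univ := by
  rw [peyriereMeasure_apply_eq_lintegral_cascadeMeasure hW.measurable k (measurableSet_le
      (measurable_cascadeMeasure_cylinder_wordPrefix hW.measurable k n)
      ((measurable_cascadeMeasure_cylinder_wordPrefix hW.measurable n n).const_mul c)),
    ← hW.lintegral_cascadeMeasure_univ ν n, ← lintegral_const_mul _
      (measurable_cascadeMeasure_apply hW.measurable n MeasurableSet.univ)]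
  refine lintegral_mono fun ω => ?_
  exact measure_le_of_forall_cylinder
    (fun w => cascadeMeasure W ν k ω (cylinder w) ≤ c * cascadeMeasure W ν n ω (cylinder w))
    fun _ hw => hw

lemma peyriereMeasure_le_cascadeMeasure_le (hW : IsCascade P W ρ) [SFinite ν] {a d : ℕ → ℝ≥0∞}
    {c : ℝ≥0∞} (hc : c ≠ 0) (hc' : c ≠ ∞) {n k : ℕ} (hnk : n ≤ k) :
    peyriereMeasure P W ν k
        {p | (∀ j ≤ k, cascadeDensity W j p.1 p.2 ≤ a j) ∧
          (∀ j ≤ k, ν (cylinder (wordPrefix p.2 j)) ≤ d j) ∧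
          c ≤ cascadeMeasure W ν k p.1 (cylinder (wordPrefix p.2 n))} ≤
      (∑ m ∈ Finset.Icc n k, a m * d m) / c * ν univ := by
  have := hW.isProbabilityMeasure
  rw [peyriereMeasure_apply_eq_lintegral_spineMeasure hW.measurable k, ← lintegral_const]
  · refine lintegral_mono fun x => ?_
    by_cases hx : ∀ j ≤ k, ν (cylinder (wordPrefix x j)) ≤ d j
    swap
    · simp [hx]
    let S : Set Ω := {ω | ∀ j ≤ k, cascadeDensity W j ω x ≤ a j}
    let mass (ω : Ω) : ℝ≥0∞ := cascadeMeasure W ν k ω (cylinder (wordPrefix x n))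
    have mass_meas : Measurable mass :=
      measurable_cascadeMeasure_apply hW.measurable k (measurableSet_cylinder _)
    calc spineMeasure P W k x {ω | (∀ j ≤ k, cascadeDensity W j ω x ≤ a j) ∧
            (∀ j ≤ k, ν (cylinder (wordPrefix x j)) ≤ d j) ∧ c ≤ mass ω}
        ≤ (spineMeasure P W k x).restrict S {ω | c ≤ mass ω} := by
          rw [Measure.restrict_apply (measurableSet_le measurable_const mass_meas)]
          exact measure_mono fun ω hω => ⟨hω.2.2, hω.1⟩
      _ ≤ (∫⁻ ω in S, mass ω ∂spineMeasure P W k x) / c :=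
          meas_ge_le_lintegral_div mass_meas.aemeasurable hc hc'
      _ ≤ (∑ m ∈ Finset.Icc n k, a m * d m) / c := by
          gcongr
          refine (hW.setLIntegral_cascadeMeasure_cylinder_le ν (fun ω hω => hω) hnk).trans ?_
          gcongr with m hm
          exact hx m (Finset.mem_Icc.1 hm).2
  · exact measurableSet_forall_le_and_le_cascadeMeasure hW.measurable n k

lemma peyriereMeasure_exists_cascadeDensity_mem_le (hW : IsCascade P W ρ) [SFinite ν]
    {U : ℕ → Set ℝ≥0∞} (hU : ∀ n, MeasurableSet (U n)) (k : ℕ) :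
    peyriereMeasure P W ν k {p | ∃ j ≤ k, cascadeDensity W j p.1 p.2 ∈ U j} ≤
      Measure.infinitePi (fun _ : ℕ => sizeBiased ρ)
        {t | ∃ n, ∏ i ∈ Finset.range n, t i ∈ U n} * ν univ := by
  have := hW.isProbabilityMeasure
  have hmeas : MeasurableSet {p : Ω × SymbSpace b | ∃ j ≤ k, cascadeDensity W j p.1 p.2 ∈ U j} := by
    simp only [ofPred_exists, ofPred_and]
    exact MeasurableSet.iUnion fun j =>
      (MeasurableSet.const _).inter (measurable_cascadeDensity hW.measurable j (hU j))
  rw [peyriereMeasure_apply_eq_lintegral_spineMeasure hW.measurable k hmeas, ← lintegral_const]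
  exact lintegral_mono fun x => hW.spineMeasure_exists_cascadeDensity_mem_le hU k x

end IsCascade

/-- The pairs `(ω, x)` for which, up to time `k`, the density `Q_j(ω, x)` grows at rate `h` and
the mass `ν [x|_j]` decays at rate `D`, with an error `ε` on both rates and factors `exp a`. -/
def typicalSet (W : List (Fin b) → Ω → ℝ≥0∞) (ν : Measure (SymbSpace b)) (h D ε a : ℝ) (k : ℕ) :
    Set (Ω × SymbSpace b) :=
  {p | ∀ j ≤ k, cascadeDensity W j p.1 p.2 ∈ expWindow h ε a j ∧
    ν (cylinder (wordPrefix p.2 j)) ∈ expWindow (-D) ε a j}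

variable {h D ε a : ℝ} {n k : ℕ}

namespace IsCascade

lemma exists_forall_peyriereMeasure_compl_typicalSet_le (hW : IsCascade P W ρ) [IsFiniteMeasure ν]
    (hlog : Integrable (fun t => Real.log t.toReal) (sizeBiased ρ))
    (hh : ∫ t, Real.log t.toReal ∂sizeBiased ρ = h)
    (hν : ∀ᵐ x ∂ν, Tendsto (fun n : ℕ => Real.log (ν (cylinder (wordPrefix x n))).toReal / n)
      atTop (nhds (-D))) (hε : 0 < ε) {η : ℝ≥0∞} (hη : 0 < η) :
    ∃ M : ℕ, ∀ k, peyriereMeasure P W ν k (typicalSet W ν h D ε M k)ᶜ ≤ η := by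
  have := isProbabilityMeasure_sizeBiased hW.lintegral_eq_one
  have hQ := tendsto_infinitePi_exists_prod_notMem_expWindow ae_sizeBiased_ne_zero
    (ae_sizeBiased_ne_top (hW.lintegral_eq_one.trans_ne ENNReal.one_ne_top)) hlog hε
  rw [hh] at hQ
  have hm : Tendsto (fun M : ℕ => ν {x | ∃ n, ν (cylinder (wordPrefix x n)) ∉
      expWindow (-D) ε M n}) atTop (nhds 0) := by
    refine tendsto_measure_exists_notMem_expWindow measurable_measure_cylinder_wordPrefix ?_
    filter_upwards [hν, ae_measure_cylinder_wordPrefix_ne_zero ν] with x hx h0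
    exact exists_forall_mem_expWindow hε h0 (fun n => measure_ne_top _ _) hx
  have hsum := (ENNReal.Tendsto.mul_const hQ (Or.inr (measure_ne_top ν univ))).add hm
  rw [zero_mul, zero_add] at hsum
  obtain ⟨M, hM⟩ := (hsum.eventually (gt_mem_nhds hη)).exists
  refine ⟨M, fun k => le_trans ?_ hM.le⟩
  have hsub : (typicalSet W ν h D ε M k)ᶜ ⊆
      {p | ∃ j ≤ k, cascadeDensity W j p.1 p.2 ∈ (expWindow h ε M j)ᶜ} ∪
        Prod.snd ⁻¹' {x | ∃ n, ν (cylinder (wordPrefix x n)) ∉ expWindow (-D) ε M n} := by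
    intro p hp
    simp only [typicalSet, mem_compl_iff, mem_ofPred_eq, not_forall, not_and_or] at hp
    obtain ⟨j, hj, hQj | hmj⟩ := hp
    exacts [Or.inl ⟨j, hj, hQj⟩, Or.inr ⟨j, hmj⟩]
  refine (measure_mono hsub).trans ((measure_union_le _ _).trans ?_)
  gcongr
  · exact hW.peyriereMeasure_exists_cascadeDensity_mem_le
      (fun n => isClosed_expWindow.measurableSet.compl) k
  · refine (hW.peyriereMeasure_preimage_snd k ?_).le
    simp only [ofPred_exists]
    exact MeasurableSet.iUnion fun n =>
      measurable_measure_cylinder_wordPrefix n isClosed_expWindow.measurableSet.compl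

variable [SFinite ν]

lemma peyriereMeasure_typicalSet_inter_lt_le (hW : IsCascade P W ρ) (hnk : n ≤ k) :
    peyriereMeasure P W ν k (typicalSet W ν h D ε a k ∩
        {p | cascadeMeasure W ν k p.1 (cylinder (wordPrefix p.2 n)) <
          eexp (n * (h - D - 3 * ε))}) ≤
      eexp (2 * a) * eexp (-ε) ^ n * ν univ := by
  refine (measure_mono fun p hp => ?_).trans
    (hW.peyriereMeasure_cascadeMeasure_le_mul (eexp (2 * a) * eexp (-ε) ^ n) k n)
  obtain ⟨hQ, hm⟩ := hp.1 n hnk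
  calc cascadeMeasure W ν k p.1 (cylinder (wordPrefix p.2 n))
      ≤ eexp (n * (h - D - 3 * ε)) := hp.2.le
    _ = eexp (2 * a) * eexp (-ε) ^ n * (eexp (n * (h - ε) - a) * eexp (n * (-D - ε) - a)) := by
        simp only [← eexp_nat_mul, ← eexp_add]
        ring_nf
    _ ≤ eexp (2 * a) * eexp (-ε) ^ n *
          (cascadeDensity W n p.1 p.2 * ν (cylinder (wordPrefix p.2 n))) := by
        gcongr
        exacts [hQ.1, hm.1]
    _ = _ := by rw [cascadeMeasure_cylinder_wordPrefix]

lemma peyriereMeasure_typicalSet_inter_gt_le (hW : IsCascade P W ρ) (hnk : n ≤ k) :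
    peyriereMeasure P W ν k (typicalSet W ν h D ε a k ∩
        {p | eexp (n * (h - D + 3 * ε)) <
          cascadeMeasure W ν k p.1 (cylinder (wordPrefix p.2 n))}) ≤
      eexp (2 * a) * (1 - eexp (h - D + 2 * ε))⁻¹ * eexp (-ε) ^ n * ν univ := by
  let A (m : ℕ) : ℝ≥0∞ := eexp (m * (h + ε) + a)
  let d (m : ℕ) : ℝ≥0∞ := eexp (m * (-D + ε) + a)
  let c : ℝ≥0∞ := eexp (n * (h - D + 3 * ε))
  let r : ℝ≥0∞ := eexp (h - D + 2 * ε)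
  have hAd (m : ℕ) : A m * d m = eexp (2 * a) * r ^ m := by
    simp only [A, d, r, ← eexp_nat_mul, ← eexp_add]
    ring_nf
  have hrc : r ^ n / c = eexp (-ε) ^ n := by
    simp only [r, c, div_eq_mul_inv, ← eexp_neg, ← eexp_nat_mul, ← eexp_add]
    ring_nf
  calc peyriereMeasure P W ν k _
      ≤ peyriereMeasure P W ν k {p | (∀ j ≤ k, cascadeDensity W j p.1 p.2 ≤ A j) ∧
          (∀ j ≤ k, ν (cylinder (wordPrefix p.2 j)) ≤ d j) ∧
          c ≤ cascadeMeasure W ν k p.1 (cylinder (wordPrefix p.2 n))} :=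
        measure_mono fun p hp =>
          ⟨fun j hj => (hp.1 j hj).1.2, fun j hj => (hp.1 j hj).2.2, hp.2.le⟩
    _ ≤ (∑ m ∈ Finset.Icc n k, A m * d m) / c * ν univ :=
        hW.peyriereMeasure_le_cascadeMeasure_le (eexp_ne_zero _) (eexp_ne_top _) hnk
    _ ≤ eexp (2 * a) * (r ^ n * (1 - r)⁻¹) / c * ν univ := by
        simp only [hAd, ← Finset.mul_sum]
        gcongr
        exact sum_Icc_pow_le r n k
    _ = eexp (2 * a) * (1 - r)⁻¹ * (r ^ n / c) * ν univ := by
        simp only [div_eq_mul_inv]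
        ring
    _ = _ := by rw [hrc]

lemma peyriereMeasure_typicalSet_inter_notMem_expWindow_le (hW : IsCascade P W ρ) (hnk : n ≤ k) :
    peyriereMeasure P W ν k (typicalSet W ν h D ε a k ∩
        {p | cascadeMeasure W ν k p.1 (cylinder (wordPrefix p.2 n)) ∉
          expWindow (h - D) (3 * ε) 0 n}) ≤
      eexp (2 * a) * (1 + (1 - eexp (h - D + 2 * ε))⁻¹) * ν univ * eexp (-ε) ^ n := by
  have hsub : typicalSet W ν h D ε a k ∩
      {p | cascadeMeasure W ν k p.1 (cylinder (wordPrefix p.2 n)) ∉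
        expWindow (h - D) (3 * ε) 0 n} ⊆
      (typicalSet W ν h D ε a k ∩
        {p | cascadeMeasure W ν k p.1 (cylinder (wordPrefix p.2 n)) <
          eexp (n * (h - D - 3 * ε))}) ∪
      (typicalSet W ν h D ε a k ∩
        {p | eexp (n * (h - D + 3 * ε)) <
          cascadeMeasure W ν k p.1 (cylinder (wordPrefix p.2 n))}) := by
    rw [← inter_union_distrib_left]
    refine inter_subset_inter_right _ fun p hp => ?_
    simpa only [expWindow, sub_zero, add_zero, mem_union, mem_ofPred_eq, mem_Icc, not_and_or,
      not_le] using hp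
  calc peyriereMeasure P W ν k _
      ≤ eexp (2 * a) * eexp (-ε) ^ n * ν univ +
          eexp (2 * a) * (1 - eexp (h - D + 2 * ε))⁻¹ * eexp (-ε) ^ n * ν univ :=
        (measure_mono hsub).trans ((measure_union_le _ _).trans
          (add_le_add (hW.peyriereMeasure_typicalSet_inter_lt_le hnk)
            (hW.peyriereMeasure_typicalSet_inter_gt_le hnk)))
    _ = _ := by ring

end IsCascade

end Typical

/-! ### Local dimension of the limit measure -/

section LocalDimension

variable {b : ℕ} {Ω : Type*} [MeasurableSpace Ω] {P : Measure Ω} {W : List (Fin b) → Ω → ℝ≥0∞}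
  {ρ : Measure ℝ≥0∞} {ν : Measure (SymbSpace b)} {h D ε : ℝ}

lemma lintegral_cascadeMeasure_hitSet [SFinite ν] (hW : ∀ w, Measurable (W w))
    {U : ℕ → Set ℝ≥0∞} (hU : ∀ n, MeasurableSet (U n)) (n₀ n₁ k : ℕ) :
    ∫⁻ ω, cascadeMeasure W ν k ω (hitSet (cascadeMeasure W ν k ω) U n₀ n₁) ∂P =
      peyriereMeasure P W ν k {p | p.2 ∈ hitSet (cascadeMeasure W ν k p.1) U n₀ n₁} := by
  have hmeas : MeasurableSet {p : Ω × SymbSpace b | ∃ n ∈ Icc n₀ n₁,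
      cascadeMeasure W ν k p.1 (cylinder (wordPrefix p.2 n)) ∈ U n} := by
    simp only [ofPred_exists, ofPred_and]
    exact MeasurableSet.iUnion fun n => (MeasurableSet.const _).inter
      (measurable_cascadeMeasure_cylinder_wordPrefix (ν := ν) hW k n (hU n))
  exact (peyriereMeasure_apply_eq_lintegral_cascadeMeasure hW k hmeas).symm

namespace IsCascade

lemma lintegral_cascadeMeasure_hitSet_le (hW : IsCascade P W ρ) [SFinite ν] {a : ℝ}
    {n₁ k : ℕ} (hk : n₁ ≤ k) (n₀ : ℕ) :
    ∫⁻ ω, cascadeMeasure W ν k ω (hitSet (cascadeMeasure W ν k ω)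
        (fun n => (expWindow (h - D) (3 * ε) 0 n)ᶜ) n₀ n₁) ∂P ≤
      peyriereMeasure P W ν k (typicalSet W ν h D ε a k)ᶜ +
        eexp (2 * a) * (1 + (1 - eexp (h - D + 2 * ε))⁻¹) * ν univ *
          (eexp (-ε) ^ n₀ * (1 - eexp (-ε))⁻¹) := by
  let T : Set (Ω × SymbSpace b) := typicalSet W ν h D ε a k
  let E (n : ℕ) : Set (Ω × SymbSpace b) :=
    {p | cascadeMeasure W ν k p.1 (cylinder (wordPrefix p.2 n)) ∉ expWindow (h - D) (3 * ε) 0 n}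
  let C : ℝ≥0∞ := eexp (2 * a) * (1 + (1 - eexp (h - D + 2 * ε))⁻¹) * ν univ
  rw [lintegral_cascadeMeasure_hitSet (ν := ν) hW.measurable
    fun n => isClosed_expWindow.measurableSet.compl]
  calc peyriereMeasure P W ν k _
      ≤ peyriereMeasure P W ν k (Tᶜ ∪ ⋃ n ∈ Finset.Icc n₀ n₁, T ∩ E n) := by
        refine measure_mono fun p ⟨n, hn, hp⟩ => ?_
        by_cases hT : p ∈ T
        · exact Or.inr (mem_biUnion (Finset.mem_Icc.2 hn) ⟨hT, hp⟩)
        · exact Or.inl hT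
    _ ≤ peyriereMeasure P W ν k Tᶜ +
          ∑ n ∈ Finset.Icc n₀ n₁, peyriereMeasure P W ν k (T ∩ E n) :=
        (measure_union_le _ _).trans (by gcongr; exact measure_biUnion_finset_le _ _)
    _ ≤ peyriereMeasure P W ν k Tᶜ + ∑ n ∈ Finset.Icc n₀ n₁, C * eexp (-ε) ^ n := by
        gcongr with n hn
        exact hW.peyriereMeasure_typicalSet_inter_notMem_expWindow_le
          ((Finset.mem_Icc.1 hn).2.trans hk)
    _ ≤ _ := by
        rw [← Finset.mul_sum]
        gcongr
        exact sum_Icc_pow_le _ n₀ n₁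

variable [IsFiniteMeasure ν] {μ : Ω → Measure (SymbSpace b)}

lemma exists_lintegral_cascadeMeasure_hitSet_le (hW : IsCascade P W ρ)
    (hlog : Integrable (fun t => Real.log t.toReal) (sizeBiased ρ))
    (hh : ∫ t, Real.log t.toReal ∂sizeBiased ρ = h)
    (hν : ∀ᵐ x ∂ν, Tendsto (fun n : ℕ => Real.log (ν (cylinder (wordPrefix x n))).toReal / n)
      atTop (nhds (-D))) (hε : 0 < ε) (hεD : 2 * ε < D - h) {η : ℝ≥0∞} (hη : 0 < η) :
    ∃ n₀, ∀ n₁, ∀ᶠ k in atTop, ∫⁻ ω, cascadeMeasure W ν k ω (hitSet (cascadeMeasure W ν k ω)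
      (fun n => (expWindow (h - D) (3 * ε) 0 n)ᶜ) n₀ n₁) ∂P ≤ η := by
  obtain ⟨M, hM⟩ := hW.exists_forall_peyriereMeasure_compl_typicalSet_le hlog hh hν hε
    (ENNReal.half_pos hη.ne')
  let C : ℝ≥0∞ := eexp (2 * M) * (1 + (1 - eexp (h - D + 2 * ε))⁻¹) * ν univ
  have inv_ne_top {t : ℝ} (ht : t < 0) : (1 - eexp t)⁻¹ ≠ ∞ :=
    ENNReal.inv_ne_top.2 (tsub_pos_of_lt (eexp_lt_one ht)).ne'
  have hC : C ≠ ∞ := ENNReal.mul_ne_top (ENNReal.mul_ne_top (eexp_ne_top _)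
    (ENNReal.add_ne_top.2 ⟨ENNReal.one_ne_top, inv_ne_top (by linarith)⟩)) (measure_ne_top _ _)
  have htail : Tendsto (fun n => C * (eexp (-ε) ^ n * (1 - eexp (-ε))⁻¹)) atTop (nhds 0) := by
    have hpow := ENNReal.tendsto_pow_atTop_nhds_zero_of_lt_one (eexp_lt_one (neg_neg_of_pos hε))
    simpa using ENNReal.Tendsto.const_mul
      (ENNReal.Tendsto.mul_const hpow (Or.inr (inv_ne_top (neg_neg_of_pos hε)))) (Or.inr hC)
  obtain ⟨n₀, hn₀⟩ := (htail.eventually (gt_mem_nhds (ENNReal.half_pos hη.ne'))).exists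
  refine ⟨n₀, fun n₁ => (eventually_ge_atTop n₁).mono fun k hk => ?_⟩
  exact (hW.lintegral_cascadeMeasure_hitSet_le hk n₀).trans
    ((add_le_add (hM k) hn₀.le).trans (ENNReal.add_halves η).le)

theorem ae_ae_tendsto_log_measure_cylinder_div (hW : IsCascade P W ρ)
    (hlog : Integrable (fun t => Real.log t.toReal) (sizeBiased ρ))
    (hh : ∫ t, Real.log t.toReal ∂sizeBiased ρ = h)
    (hν : ∀ᵐ x ∂ν, Tendsto (fun n : ℕ => Real.log (ν (cylinder (wordPrefix x n))).toReal / n)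
      atTop (nhds (-D)))
    (hhD : h < D)
    (hμ : ∀ᵐ ω ∂P, ∀ w, Tendsto (fun k => cascadeMeasure W ν k ω (cylinder w)) atTop
      (nhds (μ ω (cylinder w)))) :
    ∀ᵐ ω ∂P, ∀ᵐ x ∂μ ω, Tendsto
      (fun n : ℕ => Real.log (μ ω (cylinder (wordPrefix x n))).toReal / n) atTop
      (nhds (h - D)) := by
  have eventually_mem (j : ℕ) : ∀ᵐ ω ∂P, ∀ᵐ x ∂μ ω, ∀ᶠ n in atTop,
      μ ω (cylinder (wordPrefix x n)) ∈ expWindow (h - D) (1 / (j + 1)) 0 n := by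
    have hgap : 0 < D - h := sub_pos.2 hhD
    obtain ⟨ε, hε, hεj, hεD⟩ : ∃ ε > 0, 3 * ε ≤ 1 / ((j : ℝ) + 1) ∧ 2 * ε < D - h :=
      ⟨min (1 / ((j : ℝ) + 1)) (D - h) / 3, div_pos (lt_min (by positivity) hgap) three_pos,
        by linarith [min_le_left (1 / ((j : ℝ) + 1)) (D - h)],
        by linarith [min_le_right (1 / ((j : ℝ) + 1)) (D - h)]⟩
    have notMem_compl := ae_ae_eventually_notMem_of_lintegral_hitSet_le
      (fun k w => measurable_cascadeMeasure_apply hW.measurable k (measurableSet_cylinder w))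
      (fun n => isClosed_expWindow.isOpen_compl) hμ
      fun η hη => hW.exists_lintegral_cascadeMeasure_hitSet_le hlog hh hν hε hεD hη
    filter_upwards [notMem_compl] with ω hω
    filter_upwards [hω] with x hx
    exact hx.mono fun n hn => expWindow_subset_expWindow hεj le_rfl (not_notMem.1 hn)
  filter_upwards [ae_all_iff.2 eventually_mem] with ω hω
  filter_upwards [ae_all_iff.2 hω] with x hx
  exact tendsto_log_div_of_mem_expWindow hx

end IsCascade

end LocalDimension

/-! ### Entropy of real weights -/

section Entropy

variable {Ω : Type*} [MeasurableSpace Ω] {P : Measure Ω} {X₀ : Ω → ℝ}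

lemma ae_map_ofReal_lt_top (hm : Measurable X₀) :
    ∀ᵐ t ∂P.map fun ω => ENNReal.ofReal (X₀ ω), t < ∞ :=
  (ae_map_iff hm.ennreal_ofReal.aemeasurable measurableSet_Iio).2
    (Eventually.of_forall fun _ => ENNReal.ofReal_lt_top)

lemma integrable_log_sizeBiased_map_ofReal_iff (hm : Measurable X₀) (h0 : ∀ ω, 0 ≤ X₀ ω) :
    Integrable (fun t => Real.log t.toReal)
        (sizeBiased (P.map fun ω => ENNReal.ofReal (X₀ ω))) ↔
      Integrable (fun ω => X₀ ω * Real.log (X₀ ω)) P := by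
  have hf : Measurable fun t : ℝ≥0∞ => t.toReal * Real.log t.toReal := by fun_prop
  rw [sizeBiased, integrable_withDensity_iff_integrable_smul' measurable_id
    (ae_map_ofReal_lt_top hm)]
  simp only [id, smul_eq_mul]
  rw [integrable_map_measure hf.aestronglyMeasurable hm.ennreal_ofReal.aemeasurable]
  simp only [Function.comp_def, ENNReal.toReal_ofReal (h0 _)]

lemma integral_log_sizeBiased_map_ofReal (hm : Measurable X₀) (h0 : ∀ ω, 0 ≤ X₀ ω) :
    ∫ t, Real.log t.toReal ∂sizeBiased (P.map fun ω => ENNReal.ofReal (X₀ ω)) =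
      ∫ ω, X₀ ω * Real.log (X₀ ω) ∂P := by
  have hf : Measurable fun t : ℝ≥0∞ => t.toReal * Real.log t.toReal := by fun_prop
  rw [sizeBiased, integral_withDensity_eq_integral_toReal_smul measurable_id
    (ae_map_ofReal_lt_top hm)]
  simp only [id, smul_eq_mul]
  rw [integral_map hm.ennreal_ofReal.aemeasurable hf.aestronglyMeasurable]
  simp only [ENNReal.toReal_ofReal (h0 _)]

lemma sub_one_le_mul_log {t : ℝ} (ht : 0 ≤ t) : t - 1 ≤ t * Real.log t := by
  linarith [InformationTheory.klFun_nonneg ht, InformationTheory.klFun_apply t]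

variable [IsProbabilityMeasure P]

lemma lintegral_ofReal_neg_mul_log_le_one (h0 : ∀ ω, 0 ≤ X₀ ω) :
    ∫⁻ ω, ENNReal.ofReal (-(X₀ ω * Real.log (X₀ ω))) ∂P ≤ 1 := by
  calc ∫⁻ ω, ENNReal.ofReal (-(X₀ ω * Real.log (X₀ ω))) ∂P
      ≤ ∫⁻ _, 1 ∂P := by
        refine lintegral_mono fun ω => ENNReal.ofReal_le_one.2 ?_
        linarith [h0 ω, sub_one_le_mul_log (h0 ω)]
    _ = 1 := by simp

lemma integrable_mul_log_of_entropyX_ne_top (hX₀ : Integrable X₀ P) (hm : Measurable X₀)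
    (h0 : ∀ ω, 0 ≤ X₀ ω) (hfin : entropyX P X₀ ≠ ∞) :
    Integrable (fun ω => X₀ ω * Real.log (X₀ ω)) P := by
  have hmulLog : Measurable fun ω => X₀ ω * Real.log (X₀ ω) := hm.mul hm.log
  have hpos : ∫⁻ ω, ENNReal.ofReal (X₀ ω * Real.log (X₀ ω)) ∂P ≠ ∞ := fun htop =>
    hfin (by rw [entropyX, htop, ENNReal.top_sub
      (ne_top_of_le_ne_top ENNReal.one_ne_top (lintegral_ofReal_neg_mul_log_le_one h0))])
  have hkl : Integrable (fun ω => InformationTheory.klFun (X₀ ω)) P := by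
    refine (lintegral_ofReal_ne_top_iff_integrable
      (InformationTheory.measurable_klFun.comp hm).aestronglyMeasurable
      (Eventually.of_forall fun ω => InformationTheory.klFun_nonneg (h0 ω))).1 ?_
    refine ne_top_of_le_ne_top (ENNReal.add_ne_top.2 ⟨hpos, ENNReal.one_ne_top⟩) ?_
    calc ∫⁻ ω, ENNReal.ofReal (InformationTheory.klFun (X₀ ω)) ∂P
        ≤ ∫⁻ ω, (ENNReal.ofReal (X₀ ω * Real.log (X₀ ω)) + 1) ∂P := by
          refine lintegral_mono fun ω => ?_
          rw [← ENNReal.ofReal_one]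
          refine (ENNReal.ofReal_le_ofReal ?_).trans ENNReal.ofReal_add_le
          rw [InformationTheory.klFun_apply]
          linarith [h0 ω]
      _ = ∫⁻ ω, ENNReal.ofReal (X₀ ω * Real.log (X₀ ω)) ∂P + 1 := by
          simp [lintegral_add_left hmulLog.ennreal_ofReal]
  refine ((hkl.sub (integrable_const 1)).add hX₀).congr (Eventually.of_forall fun ω => ?_)
  simp only [Pi.add_apply, Pi.sub_apply, InformationTheory.klFun_apply]
  ring

lemma integral_mul_log_eq_toReal_entropyX (hmean : ∫ ω, X₀ ω ∂P = 1) (h0 : ∀ ω, 0 ≤ X₀ ω)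
    (hint : Integrable (fun ω => X₀ ω * Real.log (X₀ ω)) P) :
    ∫ ω, X₀ ω * Real.log (X₀ ω) ∂P = (entropyX P X₀).toReal := by
  have hX₀ : Integrable X₀ P := integrable_of_integral_eq_one hmean
  have hnonneg : 0 ≤ ∫ ω, X₀ ω * Real.log (X₀ ω) ∂P :=
    calc 0 = ∫ ω, (X₀ ω - 1) ∂P := by simp [integral_sub hX₀ (integrable_const 1), hmean]
      _ ≤ ∫ ω, X₀ ω * Real.log (X₀ ω) ∂P :=
          integral_mono (hX₀.sub (integrable_const 1)) hint fun ω => sub_one_le_mul_log (h0 ω)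
  have hsplit := integral_eq_lintegral_pos_part_sub_lintegral_neg_part hint
  have hpos : ∫⁻ ω, ENNReal.ofReal (X₀ ω * Real.log (X₀ ω)) ∂P ≠ ∞ := hint.lintegral_lt_top.ne
  have hneg : ∫⁻ ω, ENNReal.ofReal (-(X₀ ω * Real.log (X₀ ω))) ∂P ≠ ∞ :=
    hint.neg.lintegral_lt_top.ne
  rw [entropyX, ENNReal.toReal_sub_of_le _ hpos, hsplit]
  rw [← ENNReal.toReal_le_toReal hneg hpos]
  linarith

end Entropy

namespace CascadeM1

variable {b : ℕ} {Ω : Type*} [MeasurableSpace Ω] {P : Measure Ω} {X : List (Fin b) → Ω → ℝ}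
  {X₀ : Ω → ℝ}

lemma isCascade (hX : CascadeM1 P X X₀) :
    IsCascade P (fun w ω => ENNReal.ofReal (X w ω)) (P.map fun ω => ENNReal.ofReal (X₀ ω)) where
  measurable w := (hX.meas w).ennreal_ofReal
  iIndepFun := hX.indep.comp _ fun _ => ENNReal.measurable_ofReal
  map_eq w hw := ((hX.ident w hw).comp ENNReal.measurable_ofReal).map_eq
  lintegral_eq_one := by
    rw [lintegral_map (f := fun t => t) measurable_id hX.meas₀.ennreal_ofReal,
      ← ofReal_integral_eq_lintegral_ofReal (integrable_of_integral_eq_one hX.mean₀)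
        (Eventually.of_forall hX.nonneg₀), hX.mean₀, ENNReal.ofReal_one]

lemma ofReal_cascadeY_wordPrefix (hX : CascadeM1 P X X₀) (x : SymbSpace b) (n : ℕ) (ω : Ω) :
    ENNReal.ofReal (cascadeY X (wordPrefix x n) ω) =
      cascadeDensity (fun w ω => ENNReal.ofReal (X w ω)) n ω x := by
  rw [cascadeY, ENNReal.ofReal_prod_of_nonneg fun _ _ => hX.nonneg _ _, length_wordPrefix]
  exact Finset.prod_congr rfl fun i hi => by
    rw [take_wordPrefix x (Nat.succ_le_of_lt (Finset.mem_range.1 hi))]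

lemma setLIntegral_ofReal_cascadeY (hX : CascadeM1 P X X₀) (ν : Measure (SymbSpace b))
    (w : List (Fin b)) (n : ℕ) (ω : Ω) :
    ∫⁻ x in cylinder w, ENNReal.ofReal (cascadeY X (wordPrefix x n) ω) ∂ν =
      cascadeMeasure (fun w ω => ENNReal.ofReal (X w ω)) ν n ω (cylinder w) := by
  simp only [hX.ofReal_cascadeY_wordPrefix, cascadeMeasure,
    withDensity_apply _ (measurableSet_cylinder w)]

end CascadeM1

/-- **Corollary (exact dimensionality of the limit measure).** Let `Q` be a Mandelbrot
multiplicative cascade (assumption (M1)) acting on a Borel probability measure `ν` on `Σ`,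
with limit measure `Q·ν` (characterised by convergence on cylinders). If `ν` is
exact-dimensional with dimension `D > h_X`, then with probability 1, conditional on
`Q·ν ≠ 0`, the measure `Q·ν` is exact-dimensional with dimension `D − h_X`. -/
theorem exact_dimensional_limit_cascade_measure
    {b : ℕ} (hb : 2 ≤ b)
    {Ω : Type*} [MeasurableSpace Ω] (P : Measure Ω) [IsProbabilityMeasure P]
    (X : List (Fin b) → Ω → ℝ) (X₀ : Ω → ℝ)
    (hM1 : CascadeM1 P X X₀)
    (ν : Measure (SymbSpace b)) [IsProbabilityMeasure ν]
    (Qν : Ω → Measure (SymbSpace b))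
    (hQν : ∀ᵐ ω ∂P, ∀ w : List (Fin b),
      Tendsto (fun n => ∫⁻ x in cylinder w, ENNReal.ofReal (cascadeY X (wordPrefix x n) ω) ∂ν)
        atTop (nhds (Qν ω (cylinder w))))
    (D : ℝ)
    (hexact : ∀ᵐ x ∂ν, Tendsto
      (fun n : ℕ => -Real.log ((ν (cylinder (wordPrefix x n))).toReal) / n) atTop (nhds D))
    (hD : entropyX P X₀ < ENNReal.ofReal D) :
    ∀ᵐ ω ∂P, Qν ω ≠ 0 →
      ∀ᵐ x ∂(Qν ω), Tendsto
        (fun n : ℕ => -Real.log (((Qν ω) (cylinder (wordPrefix x n))).toReal) / n) atTop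
        (nhds (D - (entropyX P X₀).toReal)) := by
  have hfin : entropyX P X₀ ≠ ∞ := hD.ne_top
  have hlog : Integrable (fun ω => X₀ ω * Real.log (X₀ ω)) P :=
    integrable_mul_log_of_entropyX_ne_top (integrable_of_integral_eq_one hM1.mean₀) hM1.meas₀
      hM1.nonneg₀ hfin
  have hmean : ∫ t, Real.log t.toReal ∂sizeBiased (P.map fun ω => ENNReal.ofReal (X₀ ω)) =
      (entropyX P X₀).toReal :=
    (integral_log_sizeBiased_map_ofReal hM1.meas₀ hM1.nonneg₀).trans
      (integral_mul_log_eq_toReal_entropyX hM1.mean₀ hM1.nonneg₀ hlog)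
  have hν : ∀ᵐ x ∂ν, Tendsto (fun n : ℕ => Real.log (ν (cylinder (wordPrefix x n))).toReal / n)
      atTop (nhds (-D)) := by
    filter_upwards [hexact] with x hx
    simpa only [neg_div, neg_neg] using hx.neg
  simp only [hM1.setLIntegral_ofReal_cascadeY] at hQν
  have hlocal := hM1.isCascade.ae_ae_tendsto_log_measure_cylinder_div
    ((integrable_log_sizeBiased_map_ofReal_iff hM1.meas₀ hM1.nonneg₀).2 hlog) hmean hν
    ((ENNReal.lt_ofReal_iff_toReal_lt hfin).1 hD) hQν
  filter_upwards [hlocal] with ω hω _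
  filter_upwards [hω] with x hx
  simpa only [neg_div, neg_sub] using hx.neg

end
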